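/- For every 0 ≤ k ≤ N−1, the right action of the product B_{N−1}(σ_1) B_{N−2}(σ_2) ⋯ B_1(σ_{N−1}) on the dual basis vector ⟨1,2,…,k,0,k+1,…,N−1| satisfies ⟨1,2,…,k,0,k+1,…,N−1| B_{N−1}(σ_1) ⋯ B_1(σ_{N−1}) = G^β_{ρ_k^{−1} ω_N}(σ_1,…,σ_{N−1}; ⊖t_1,…,⊖t_{N−1}) ⟨Ω|, where ρ_k := s_1 s_2 ⋯ s_k ∈ S_N (ρ_0 = id) and ω_N ∈ S_N is the longest permutation. -/

import Mathlib

noncomputable section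
open scoped BigOperators

variable {F : Type*}

/-- `x ⊖ y := (x - y)/(1 + β·y)`. -/
def om [Field F] (β x y : F) : F := (x - y) / (1 + β * y)

/-- `⊖ t := -t/(1 + β·t)`. -/
def negOm [Field F] (β t : F) : F := (-t) / (1 + β * t)

/-- The R-matrix `R^{(n)}(x,y)` on `V ⊗ V`, `V = F^n`, with entries
`R_{ij,kl} = (1 + [k<l]·β(x⊖y)) δ_{il} δ_{jk} + [k>l]·(x⊖y) δ_{ik} δ_{jl}`;
the row index is the pair `(i,j)`, the column index is the pair `(k,l)`. -/
def Rmat [Field F] (n : ℕ) (β x y : F) :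
    Matrix (Fin n × Fin n) (Fin n × Fin n) F := Matrix.of fun p q =>
  (if p.1 = q.2 ∧ p.2 = q.1 then (if q.1 < q.2 then 1 + β * om β x y else 1) else 0) +
  (if p.1 = q.1 ∧ p.2 = q.2 ∧ q.2 < q.1 then om β x y else 0)

/-- `R_{a i}(u, τ)` : the R-matrix acting on the auxiliary space (first factor)
and the `i`-th site of `H = (F^n)^{⊗N}`, identity elsewhere. -/
def Rsite [Field F] (n N : ℕ) (β u τ : F) (i : Fin N) :
    Matrix (Fin n × (Fin N → Fin n)) (Fin n × (Fin N → Fin n)) F := Matrix.of fun p q =>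
  Rmat n β u τ (p.1, p.2 i) (q.1, q.2 i) *
    (if ∀ j, j ≠ i → p.2 j = q.2 j then 1 else 0)

/-- The monodromy matrix `T_a(u) = R_{aN}(u,t_N) ⋯ R_{a1}(u,t_1)` on `V_a ⊗ H`. -/
def Tmono [Field F] (n N : ℕ) (β u : F) (t : Fin N → F) :
    Matrix (Fin n × (Fin N → Fin n)) (Fin n × (Fin N → Fin n)) F :=
  ((List.ofFn fun i : Fin N => Rsite n N β u (t i) i).reverse).prod

/-- The block `T_a(u)_{r c}` (with respect to the auxiliary space) as an operator on `H`. -/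
def blockOp [Field F] (n N : ℕ) (β u : F) (t : Fin N → F) (r c : Fin n) :
    Matrix (Fin N → Fin n) (Fin N → Fin n) F :=
  Matrix.of fun s s' => Tmono n N β u t (r, s) (c, s')

/-- The natural basis vector `|n_1,…,n_N⟩` of `H` (also used as a dual basis covector). -/
def ket [Field F] (n N : ℕ) (g : Fin N → Fin n) : (Fin N → Fin n) → F :=
  fun s => if s = g then 1 else 0

/-- The Coxeter length of a permutation: its number of inversions. -/
def permLength {N : ℕ} (w : Equiv.Perm (Fin N)) : ℕ :=
  (Finset.univ.filter fun p : Fin N × Fin N => p.1 < p.2 ∧ w p.2 < w p.1).card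

/-- The longest permutation `ω_N : i ↦ N - 1 - i`. -/
def omegaPerm (N : ℕ) : Equiv.Perm (Fin N) :=
  ⟨Fin.rev, Fin.rev, fun i => Fin.rev_rev i, fun i => Fin.rev_rev i⟩

/-- `IsGroth M β G` says that the family `G`, indexed by `S_{M+1}`, satisfies the
defining recursion of the double β-Grothendieck polynomials:
`G_{ω}(x;y) = ∏_{i+j ≤ M+1} (x_i + y_j + β x_i y_j)` (1-based indices), and
`G_{w s_i}(x;y) = ∂^β_i G_w(x;y)` whenever `ℓ(w s_i) = ℓ(w) - 1`
(the β-divided difference acting on the x-variables). -/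
def IsGroth [Field F] (M : ℕ) (β : F)
    (G : Equiv.Perm (Fin (M + 1)) → (Fin (M + 1) → F) → (Fin (M + 1) → F) → F) : Prop :=
  (∀ x y : Fin (M + 1) → F,
      G (omegaPerm (M + 1)) x y =
        ∏ p ∈ Finset.univ.filter
            (fun p : Fin (M + 1) × Fin (M + 1) => (p.1 : ℕ) + (p.2 : ℕ) + 2 ≤ M + 1),
          (x p.1 + y p.2 + β * x p.1 * y p.2)) ∧
  (∀ (w : Equiv.Perm (Fin (M + 1))) (i : Fin M) (x y : Fin (M + 1) → F),
      permLength (w * Equiv.swap i.castSucc i.succ) + 1 = permLength w →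
      x i.castSucc ≠ x i.succ →
      G (w * Equiv.swap i.castSucc i.succ) x y =
        ((1 + β * x i.succ) * G w x y -
            (1 + β * x i.castSucc) * G w (fun j => x (Equiv.swap i.castSucc i.succ j)) y) /
          (x i.castSucc - x i.succ))

/-- The product `B_{N-1}(σ_1) B_{N-2}(σ_2) ⋯ B_1(σ_{N-1})` for `n = N = M+2`. -/
def descB [Field F] (M : ℕ) (β : F) (t : Fin (M + 2) → F) (σ : Fin (M + 1) → F) :
    Matrix (Fin (M + 2) → Fin (M + 2)) (Fin (M + 2) → Fin (M + 2)) F :=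
  (List.ofFn fun a : Fin (M + 1) =>
      blockOp (M + 2) (M + 2) β (σ a) t 0 (Fin.rev a).succ).prod

/-- The permutation `ρ_k = s_1 s_2 ⋯ s_k ∈ S_{M+2}` (`ρ_0 = 1`). -/
def rhoPerm (M k : ℕ) (hk : k ≤ M + 1) : Equiv.Perm (Fin (M + 2)) :=
  (List.ofFn fun i : Fin k =>
      Equiv.swap (⟨i, by have := i.isLt; omega⟩ : Fin (M + 2))
        ⟨(i : ℕ) + 1, by have := i.isLt; omega⟩).prod

/-!
If the nonzero colours of a state increase from left to right, the auxiliary line of `B_c`, for `c`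
the largest colour present, must pick `c` up at its site `p` and carry it straight through all sites
`j < p`: once it drops below `c` it cannot return. So `B_c(u)` empties `p` at the cost of
`∏_{j < p} (u ⊖ t_j)`, and the product of operators yields `∏_a ∏_{j < p_a} (σ_a ⊖ t_j)`.

On the other side `ρ_k⁻¹ ω_N = ω_N s_{N-k} ⋯ s_{N-1}`. The polynomial of `ω_N` is
`∏_i [x_i|y]^{N-i}` with `[x|y]^l = (x ⊕ y_1) ⋯ (x ⊕ y_l)`. Applying `∂_{N-k}, …, ∂_{N-1}` in turn,
each `∂_i` finds the exponents of `x_i` and `x_{i+1}` differing by one, so it meets a function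
symmetric in the two variables times a single factor `x_i ⊕ b`; as `∂_i (x_i ⊕ b) = 1`, this factor
is just deleted. The exponents that remain are the numbers of sites to the left of the colours
`N-1, …, 1` in `⟨1,…,k,0,k+1,…,N-1|`.
-/

section MatrixAction

variable {ι R : Type*} [Fintype ι] [DecidableEq ι] [CommSemiring R]

theorem vecMul_prod_ofFn {m : ℕ} (v : Fin (m + 1) → ι → R) (A : Fin m → Matrix ι ι R)
    (c : Fin m → R) (h : ∀ i, Matrix.vecMul (v i.castSucc) (A i) = c i • v i.succ) :
    Matrix.vecMul (v 0) (List.ofFn A).prod = (∏ i, c i) • v (Fin.last m) := by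
  induction m with
  | zero => simp
  | succ m ih =>
    have tail := ih (fun i => v i.succ) (fun i => A i.succ) (fun i => c i.succ) fun i => h i.succ
    rw [List.ofFn_succ, List.prod_cons, ← Matrix.vecMul_vecMul, ← Fin.castSucc_zero, h 0,
      Matrix.smul_vecMul, tail, smul_smul, ← Fin.prod_univ_succ, Fin.succ_last]

end MatrixAction

section Monodromy

variable [Field F] {n N : ℕ}

theorem ket_eq_single (g : Fin N → Fin n) : ket (F := F) n N g = Pi.single g 1 := by
  ext s
  simp [ket, Pi.single_apply]

theorem Rsite_row (β u τ : F) (i : Fin N) (a : Fin n) (s : Fin N → Fin n) :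
    Rsite n N β u τ i (a, s) =
      (if s i < a then 1 + β * om β u τ else 1) • Pi.single (s i, Function.update s i a) 1 +
        (if s i < a then om β u τ else 0) • Pi.single (a, s) 1 := by
  ext ⟨b, s'⟩
  by_cases agree : ∀ j, j ≠ i → s j = s' j
  · obtain ⟨d, rfl⟩ : ∃ d, s' = Function.update s i d :=
      ⟨s' i, (Function.update_eq_iff.2 ⟨rfl, agree⟩).symm⟩
    have eq_s : Function.update s i d = s ↔ d = s i := Function.update_eq_self_iff
    simp only [Rsite, Rmat, Matrix.of_apply, Pi.add_apply, Pi.smul_apply, Pi.single_apply,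
      Prod.mk.injEq, eq_s, (Function.update_injective s i).eq_iff, if_pos agree,
      Function.update_self, smul_eq_mul]
    grind
  · have ne_swapped : (b, s') ≠ (s i, Function.update s i a) := by
      rintro ⟨⟩
      exact agree fun j hj => (Function.update_of_ne hj _ _).symm
    have ne_self : (b, s') ≠ (a, s) := by
      rintro ⟨⟩
      exact agree fun _ _ => rfl
    rw [Pi.add_apply, Pi.smul_apply, Pi.smul_apply, Pi.single_eq_of_ne ne_swapped,
      Pi.single_eq_of_ne ne_self]
    simp [Rsite, agree]

theorem Rsite_mul_row (β u τ : F) (i : Fin N) (a : Fin n) (s : Fin N → Fin n)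
    (A : Matrix (Fin n × (Fin N → Fin n)) (Fin n × (Fin N → Fin n)) F) :
    (Rsite n N β u τ i * A) (a, s) =
      (if s i < a then 1 + β * om β u τ else 1) • A (s i, Function.update s i a) +
        (if s i < a then om β u τ else 0) • A (a, s) := by
  rw [Matrix.mul_apply_eq_vecMul, Rsite_row, Matrix.add_vecMul, Matrix.smul_vecMul,
    Matrix.smul_vecMul, Matrix.single_one_vecMul, Matrix.single_one_vecMul]
  rfl

/-- The partial monodromy matrix `R_{am}(u,t_m) ⋯ R_{a1}(u,t_1)` over the first `m` sites, through
which `Tmono` is computed one site at a time. -/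
def partialMono (β u : F) (t : Fin N → F) (m : Fin (N + 1)) :
    Matrix (Fin n × (Fin N → Fin n)) (Fin n × (Fin N → Fin n)) F :=
  (((List.ofFn fun i : Fin N => Rsite n N β u (t i) i).take m).reverse).prod

variable (β u : F) (t : Fin N → F)

theorem partialMono_zero : partialMono (n := n) β u t 0 = 1 := by
  simp [partialMono]

theorem partialMono_succ (i : Fin N) :
    partialMono (n := n) β u t i.succ =
      Rsite n N β u (t i) i * partialMono β u t i.castSucc := by
  simp [partialMono, List.take_add_one]

theorem partialMono_last : partialMono β u t (Fin.last N) = Tmono n N β u t := by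
  rw [partialMono, Tmono, List.take_of_length_le (by simp)]

variable {β u t} {c : Fin n} {s : Fin N → Fin n}

theorem partialMono_apply_eq_zero (s' : Fin N → Fin n) {a : Fin n} {m : Fin (N + 1)} (ha : a < c)
    (hs : ∀ j : Fin N, j.castSucc < m → s j < c) : partialMono β u t m (a, s) (c, s') = 0 := by
  induction m using Fin.induction generalizing a s with
  | zero =>
    rw [partialMono_zero, Matrix.one_apply_ne]
    exact fun h => ha.ne (congrArg Prod.fst h)
  | succ i ih =>
    have hs_lt : ∀ j : Fin N, j.castSucc < i.castSucc → s j < c :=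
      fun j hj => hs j (hj.trans Fin.castSucc_lt_succ)
    have swapped : partialMono β u t i.castSucc (s i, Function.update s i a) (c, s') = 0 := by
      refine ih (hs i Fin.castSucc_lt_succ) fun j hj => ?_
      rw [Function.update_of_ne (by rintro rfl; exact hj.false)]
      exact hs_lt j hj
    have straight : partialMono β u t i.castSucc (a, s) (c, s') = 0 := ih ha hs_lt
    rw [partialMono_succ, Rsite_mul_row, Pi.add_apply, Pi.smul_apply, Pi.smul_apply, swapped,
      straight, smul_zero, smul_zero, add_zero]

theorem partialMono_apply_self (s' : Fin N → Fin n) {m : Fin (N + 1)}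
    (hs : ∀ j : Fin N, j.castSucc < m → s j < c) :
    partialMono β u t m (c, s) (c, s') =
      (∏ j : Fin N with j.castSucc < m, om β u (t j)) * ket n N s s' := by
  induction m using Fin.induction with
  | zero => simp [partialMono_zero, ket, Matrix.one_apply, eq_comm]
  | succ i ih =>
    have hsi : s i < c := hs i Fin.castSucc_lt_succ
    have hs_lt : ∀ j : Fin N, j.castSucc < i.castSucc → s j < c :=
      fun j hj => hs j (hj.trans Fin.castSucc_lt_succ)
    have swapped : partialMono β u t i.castSucc (s i, Function.update s i c) (c, s') = 0 := by
      refine partialMono_apply_eq_zero s' hsi fun j hj => ?_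
      rw [Function.update_of_ne (by rintro rfl; exact hj.false)]
      exact hs_lt j hj
    have sites : ({j : Fin N | j.castSucc < i.succ} : Finset (Fin N)) =
        insert i ({j : Fin N | j.castSucc < i.castSucc} : Finset (Fin N)) := by
      ext j
      simp [le_iff_eq_or_lt]
    rw [partialMono_succ, Rsite_mul_row, Pi.add_apply, Pi.smul_apply, Pi.smul_apply, swapped,
      smul_zero, zero_add, if_pos hsi, ih hs_lt, sites, Finset.prod_insert (by simp), smul_eq_mul,
      mul_assoc]

end Monodromy

section CreationOperators

variable [Field F] {n N : ℕ} {β u : F} {t : Fin N → F}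

theorem partialMono_zero_apply {c : Fin (n + 1)} {s : Fin N → Fin (n + 1)} {p : Fin N}
    (hp : s p = c) (hlt : ∀ j < p, s j < c) (hgt : ∀ j, p < j → s j = 0) (s' : Fin N → Fin (n + 1))
    {m : Fin (N + 1)} (hm : p.castSucc < m) :
    partialMono β u t m (0, s) (c, s') =
      (∏ j ∈ Finset.Iio p, om β u (t j)) * ket (n + 1) N (Function.update s p 0) s' := by
  induction m using Fin.induction with
  | zero => exact absurd hm (Fin.not_lt_zero _)
  | succ i ih =>
    rw [partialMono_succ, Rsite_mul_row, if_neg (Fin.not_lt_zero _), if_neg (Fin.not_lt_zero _),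
      one_smul, zero_smul, add_zero]
    rcases (Fin.castSucc_lt_succ_iff.1 hm).eq_or_lt with rfl | hpi
    · have hs : ∀ j : Fin N, j.castSucc < p.castSucc → Function.update s p 0 j < c := by
        intro j hj
        rw [Function.update_of_ne (by rintro rfl; exact hj.false)]
        exact hlt j hj
      rw [hp, partialMono_apply_self s' hs]
      congr 2
      ext j
      simp
    · rw [hgt i hpi, ← hgt i hpi, Function.update_eq_self, hgt i hpi]
      exact ih hpi

theorem ket_vecMul_blockOp {c : Fin (n + 1)} {s : Fin N → Fin (n + 1)} {p : Fin N}
    (hp : s p = c) (hlt : ∀ j < p, s j < c) (hgt : ∀ j, p < j → s j = 0) :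
    Matrix.vecMul (ket (n + 1) N s) (blockOp (n + 1) N β u t 0 c) =
      (∏ j ∈ Finset.Iio p, om β u (t j)) • ket (n + 1) N (Function.update s p 0) := by
  rw [ket_eq_single, Matrix.single_one_vecMul]
  ext s'
  rw [Matrix.row_apply, blockOp, Matrix.of_apply, ← partialMono_last,
    partialMono_zero_apply hp hlt hgt s' (Fin.castSucc_lt_last p), Pi.smul_apply, smul_eq_mul]

/-- The state obtained from `g` by emptying (recolouring by `0`) the sites of colour above `c`. -/
def truncateAbove (g : Fin N → Fin (n + 1)) (c : Fin (n + 1)) : Fin N → Fin (n + 1) :=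
  fun j => if g j ≤ c then g j else 0

theorem truncateAbove_last (g : Fin N → Fin (n + 1)) : truncateAbove g (Fin.last n) = g := by
  ext j
  simp [truncateAbove, Fin.le_last]

theorem truncateAbove_zero (g : Fin N → Fin (n + 1)) : truncateAbove g 0 = fun _ => 0 := by
  ext j
  simp +contextual [truncateAbove]

variable {g : Fin N → Fin (n + 1)}

theorem ket_truncateAbove_vecMul_blockOp (hg : ∀ i j, i < j → g j ≠ 0 → g i < g j) {c : Fin n}
    {p : Fin N} (hp : g p = c.succ) :
    Matrix.vecMul (ket (n + 1) N (truncateAbove g c.succ)) (blockOp (n + 1) N β u t 0 c.succ) =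
      (∏ j ∈ Finset.Iio p, om β u (t j)) • ket (n + 1) N (truncateAbove g c.castSucc) := by
  have left (j) (hj : j < p) : g j < c.succ := hp ▸ hg j p hj (hp ▸ Fin.succ_ne_zero c)
  have right (j) (hj : p < j) (h0 : g j ≠ 0) : c.succ < g j := hp ▸ hg p j hj h0
  have emptied : Function.update (truncateAbove g c.succ) p 0 = truncateAbove g c.castSucc := by
    ext j
    rcases lt_trichotomy j p with hj | rfl | hj
    all_goals grind [truncateAbove]
  rw [ket_vecMul_blockOp (p := p), emptied]
  · simp [truncateAbove, hp]
  · intro j hj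
    rw [truncateAbove, if_pos (left j hj).le]
    exact left j hj
  · grind [truncateAbove]

theorem ket_vecMul_prod_blockOp (hg : ∀ i j, i < j → g j ≠ 0 → g i < g j) {p : Fin n → Fin N}
    (hp : ∀ c, g (p c) = c.succ) (σ : Fin n → F) :
    Matrix.vecMul (ket (n + 1) N g)
        (List.ofFn fun a : Fin n => blockOp (n + 1) N β (σ a) t 0 a.rev.succ).prod =
      (∏ a, ∏ j ∈ Finset.Iio (p a.rev), om β (σ a) (t j)) • ket (n + 1) N fun _ => 0 := by
  have chain := vecMul_prod_ofFn (fun a : Fin (n + 1) => ket (F := F) _ N (truncateAbove g a.rev))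
    (fun a => blockOp (n + 1) N β (σ a) t 0 a.rev.succ)
    (fun a => ∏ j ∈ Finset.Iio (p a.rev), om β (σ a) (t j)) fun a => by
      rw [Fin.rev_castSucc, Fin.rev_succ]
      exact ket_truncateAbove_vecMul_blockOp hg (hp a.rev)
  rwa [Fin.rev_zero, truncateAbove_last, Fin.rev_last, truncateAbove_zero] at chain

end CreationOperators

section Permutations

variable {n : ℕ}

theorem swap_castSucc_succ_lt_swap_iff {i : Fin n} {a b : Fin (n + 1)}
    (h : (a, b) ≠ (i.castSucc, i.succ)) (h' : (a, b) ≠ (i.succ, i.castSucc)) :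
    Equiv.swap i.castSucc i.succ a < Equiv.swap i.castSucc i.succ b ↔ a < b := by
  simp only [Equiv.swap_apply_def, ne_eq, Prod.mk.injEq, Fin.ext_iff, Fin.val_castSucc,
    Fin.val_succ] at *
  grind

theorem permLength_mul_swap_add_one {w : Equiv.Perm (Fin (n + 1))} {i : Fin n}
    (h : w i.succ < w i.castSucc) :
    permLength (w * Equiv.swap i.castSucc i.succ) + 1 = permLength w := by
  set s := Equiv.swap i.castSucc i.succ with hs
  set inversions : Finset (Fin (n + 1) × Fin (n + 1)) := {p | p.1 < p.2 ∧ w p.2 < w p.1}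
  have mem_inversions : (i.castSucc, i.succ) ∈ inversions := by simp [inversions, h]
  have inversions_mul_swap :
      ({p | p.1 < p.2 ∧ (w * s) p.2 < (w * s) p.1} : Finset (Fin (n + 1) × Fin (n + 1))) =
        (inversions.erase (i.castSucc, i.succ)).map (s.prodCongr s).toEmbedding := by
    ext ⟨a, b⟩
    have preimage : (s.prodCongr s).symm (a, b) = (s a, s b) := by simp [hs]
    rw [Finset.mem_filter_univ, Finset.mem_map_equiv, preimage, Finset.mem_erase,
      Finset.mem_filter_univ]
    by_cases hab : (a, b) = (i.castSucc, i.succ)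
    · obtain ⟨rfl, rfl⟩ := Prod.mk.inj hab
      simp [hs, h.not_gt]
    by_cases hba : (a, b) = (i.succ, i.castSucc)
    · obtain ⟨rfl, rfl⟩ := Prod.mk.inj hba
      simp [hs, Fin.castSucc_lt_succ.not_gt]
    have image_ne : (s a, s b) ≠ (i.castSucc, i.succ) := by
      simpa [hs, Equiv.swap_apply_eq_iff] using hba
    rw [swap_castSucc_succ_lt_swap_iff hab hba]
    exact (and_iff_right image_ne).symm
  rw [permLength, inversions_mul_swap, Finset.card_map, Finset.card_erase_add_one mem_inversions]
  rfl

theorem cycleIcc_castSucc_succ (i : Fin n) :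
    Fin.cycleIcc i.castSucc i.succ = Equiv.swap i.castSucc i.succ := by
  ext j
  rcases lt_trichotomy j i.castSucc with hj | rfl | hj
  · rw [Fin.cycleIcc_of_lt hj,
      Equiv.swap_apply_of_ne_of_ne hj.ne (hj.trans Fin.castSucc_lt_succ).ne]
  · rw [Fin.cycleIcc_of_ge_of_lt le_rfl Fin.castSucc_lt_succ, Equiv.swap_apply_left,
      Fin.coeSucc_eq_succ]
  · rcases (Fin.castSucc_lt_iff_succ_le.1 hj).eq_or_lt with rfl | hj'
    · rw [Fin.cycleIcc_of_last hj.le, Equiv.swap_apply_right]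
    · rw [Fin.cycleIcc_of_gt hj', Equiv.swap_apply_of_ne_of_ne hj.ne' hj'.ne']

theorem cycleIcc_succ {a : Fin (n + 1)} {i : Fin n} (ha : a ≤ i.castSucc) :
    Fin.cycleIcc a i.succ = Fin.cycleIcc a i.castSucc * Equiv.swap i.castSucc i.succ := by
  rw [← cycleIcc_castSucc_succ]
  exact Equiv.coe_fn_injective (Fin.cycleIcc.trans ha Fin.castSucc_lt_succ.le).symm

theorem rhoPerm_eq_cycleRange (M k : ℕ) (hk : k ≤ M + 1) :
    rhoPerm M k hk = Fin.cycleRange ⟨k, Nat.lt_succ_of_le hk⟩ := by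
  induction k with
  | zero => simp [rhoPerm]
  | succ k ih =>
    rw [rhoPerm, List.ofFn_succ', List.concat_eq_append, List.prod_append, List.prod_singleton]
    have init := ih (Nat.le_of_succ_le hk)
    rw [← Fin.cycleIcc_zero_eq_cycleRange] at init ⊢
    exact (congrArg (· * _) init).trans (cycleIcc_succ (i := ⟨k, hk⟩) (Fin.zero_le _)).symm

theorem cycleRange_lt_of_lt {k i j : Fin (n + 1)} (hij : i < j) (hj : k.cycleRange j ≠ 0) :
    k.cycleRange i < k.cycleRange j := by
  rcases eq_or_ne j k with rfl | hjk
  · exact absurd (Fin.cycleRange_self j) hj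
  obtain ⟨j, rfl⟩ := Fin.exists_succAbove_eq hjk
  rcases eq_or_ne i k with rfl | hik
  · simp
  obtain ⟨i, rfl⟩ := Fin.exists_succAbove_eq hik
  simpa using hij

theorem cycleIcc_last_castSucc (a : Fin (n + 1)) (i : Fin n) :
    Fin.cycleIcc a (Fin.last n) i.castSucc = a.succAbove i := by
  rw [← Fin.succAbove_last]
  exact congrFun (Fin.cycleIcc_comp_succAbove a (Fin.last n) (Fin.le_last a)) i

theorem cycleRange_inv_mul_omegaPerm (k : Fin (n + 1)) :
    (k.cycleRange)⁻¹ * omegaPerm (n + 1) =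
      omegaPerm (n + 1) * Fin.cycleIcc k.rev (Fin.last n) := by
  ext j
  simp only [Equiv.Perm.mul_apply, omegaPerm, Equiv.coe_fn_mk, Equiv.Perm.inv_def]
  cases j using Fin.lastCases with
  | last => simp [Fin.cycleIcc_of_last (Fin.le_last _)]
  | cast i =>
    rw [Fin.rev_castSucc, Fin.cycleRange_symm_succ, cycleIcc_last_castSucc, Fin.rev_succAbove,
      Fin.rev_rev]

theorem update_update_rev_comp_cycleIcc_succ {a : Fin (n + 1)} {i : Fin n} (ha : a ≤ i.castSucc) :
    Function.update (Function.update (Fin.rev ∘ Fin.cycleIcc a i.succ) i.succ i.succ.rev)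
        i.castSucc i.rev.succ =
      Function.update (Fin.rev ∘ Fin.cycleIcc a i.castSucc) i.castSucc i.castSucc.rev := by
  ext j
  rcases eq_or_ne j i.castSucc with rfl | hj
  · rw [Function.update_self, Function.update_self, Fin.rev_castSucc]
  rw [Function.update_of_ne hj, Function.update_of_ne hj, Function.comp_apply]
  rcases eq_or_ne j i.succ with rfl | hj'
  · rw [Function.update_self, Fin.cycleIcc_of_gt Fin.castSucc_lt_succ]
  · rw [Function.update_of_ne hj', Function.comp_apply, cycleIcc_succ ha, Equiv.Perm.mul_apply,
      Equiv.swap_apply_of_ne_of_ne hj hj']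

theorem omegaPerm_mul_cycleIcc_succ_lt {a : Fin (n + 1)} {i : Fin n} (ha : a ≤ i.castSucc) :
    (omegaPerm (n + 1) * Fin.cycleIcc a i.castSucc) i.succ <
      (omegaPerm (n + 1) * Fin.cycleIcc a i.castSucc) i.castSucc := by
  rw [Equiv.Perm.mul_apply, Equiv.Perm.mul_apply, Fin.cycleIcc_of_gt Fin.castSucc_lt_succ,
    Fin.cycleIcc_of_last ha]
  exact Fin.rev_lt_rev.2 (ha.trans_lt Fin.castSucc_lt_succ)

end Permutations

section FactorialPowers

variable {R : Type*} [CommSemiring R]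

/-- The formal group law `x ⊕ y = x + y + β x y`, whose inverse operation is `⊖`. -/
def oplus (β x y : R) : R := x + y + β * x * y

/-- The β-factorial power `[x|y]^l = (x ⊕ y_1) ⋯ (x ⊕ y_l)`. The exponent `l` is an element of
`Fin n`, so that the factors are those of index `j < l` in the 0-based indexing. -/
def factorialPow {n : ℕ} (β : R) (y : Fin n → R) (l : Fin n) (x : R) : R :=
  ∏ j ∈ Finset.Iio l, oplus β x (y j)

/-- The polynomial `∏_i [x_i|y]^{μ_i}`, to which double β-Grothendieck polynomials of dominant
permutations are equal, `μ` being the Lehmer code. -/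
def shapeProd {m n : ℕ} (β : R) (y : Fin n → R) (μ : Fin m → Fin n) (x : Fin m → R) : R :=
  ∏ i, factorialPow β y (μ i) (x i)

variable {m n : ℕ}

theorem factorialPow_zero (β : R) (y : Fin (n + 1) → R) (x : R) : factorialPow β y 0 x = 1 := by
  simp [factorialPow, ← bot_eq_zero]

theorem factorialPow_succ (β : R) (y : Fin (n + 1) → R) (l : Fin n) (x : R) :
    factorialPow β y l.succ x = oplus β x (y l.castSucc) * factorialPow β y l.castSucc x := by
  have factors : Finset.Iio l.succ = insert l.castSucc (Finset.Iio l.castSucc) := by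
    ext j
    rw [Finset.mem_insert, Finset.mem_Iio, Finset.mem_Iio, ← le_iff_eq_or_lt,
      Fin.le_castSucc_iff]
  rw [factorialPow, factors, Finset.prod_insert (by simp), factorialPow]

theorem shapeProd_update_succ (β : R) (y : Fin (n + 1) → R) {μ : Fin m → Fin (n + 1)} {i : Fin m}
    {l : Fin n} (hi : μ i = l.castSucc) (x : Fin m → R) :
    shapeProd β y (Function.update μ i l.succ) x =
      oplus β (x i) (y l.castSucc) * shapeProd β y μ x := by
  have others : ∏ j ∈ Finset.univ.erase i, factorialPow β y (Function.update μ i l.succ j) (x j) =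
      ∏ j ∈ Finset.univ.erase i, factorialPow β y (μ j) (x j) :=
    Finset.prod_congr rfl fun j hj => by rw [Function.update_of_ne (Finset.ne_of_mem_erase hj)]
  rw [shapeProd, shapeProd, ← Finset.mul_prod_erase _ _ (Finset.mem_univ i), others,
    ← Finset.mul_prod_erase _ _ (Finset.mem_univ i), Function.update_self, factorialPow_succ, hi,
    mul_assoc]

theorem shapeProd_comp_perm (β : R) (y : Fin n → R) {μ : Fin m → Fin n} {w : Equiv.Perm (Fin m)}
    (hμ : μ ∘ w = μ) (x : Fin m → R) : shapeProd β y μ (x ∘ w) = shapeProd β y μ x := by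
  rw [shapeProd, shapeProd, ← Equiv.prod_comp w fun j => factorialPow β y (μ j) (x j)]
  exact Finset.prod_congr rfl fun j _ => by rw [← congrFun hμ j]; rfl

theorem shapeProd_snoc_zero (β : R) (y : Fin (n + 1) → R) (μ : Fin m → Fin (n + 1))
    (x : Fin (m + 1) → R) :
    shapeProd β y (Fin.snoc (α := fun _ => Fin (n + 1)) μ 0) x = shapeProd β y μ (Fin.init x) := by
  simp [shapeProd, Fin.prod_univ_castSucc, factorialPow_zero, Fin.init]

end FactorialPowers

section DividedDifferences

variable [Field F] {m n : ℕ} {β : F}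

theorem om_eq_oplus_negOm {u τ : F} (h : 1 + β * τ ≠ 0) : om β u τ = oplus β u (negOm β τ) := by
  rw [om, oplus, negOm, div_eq_iff h, add_mul, add_mul, div_mul_cancel₀ _ h, mul_assoc (β * u),
    div_mul_cancel₀ _ h]
  ring

/-- The β-divided difference operator `∂^β_i`. It takes the junk value `0` where
`x_i = x_{i+1}`. -/
def betaDivDiff (β : F) (i : Fin m) (f : (Fin (m + 1) → F) → F) (x : Fin (m + 1) → F) : F :=
  ((1 + β * x i.succ) * f x -
      (1 + β * x i.castSucc) * f (x ∘ Equiv.swap i.castSucc i.succ)) /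
    (x i.castSucc - x i.succ)

theorem betaDivDiff_mul_of_symmetric {i : Fin m} (f : (Fin (m + 1) → F) → F)
    {g : (Fin (m + 1) → F) → F} {x : Fin (m + 1) → F}
    (hg : g (x ∘ Equiv.swap i.castSucc i.succ) = g x) :
    betaDivDiff β i (fun x => f x * g x) x = betaDivDiff β i f x * g x := by
  simp only [betaDivDiff, hg]
  ring

theorem betaDivDiff_oplus {i : Fin m} (b : F) {x : Fin (m + 1) → F}
    (hx : x i.castSucc ≠ x i.succ) :
    betaDivDiff β i (fun x => oplus β (x i.castSucc) b) x = 1 := by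
  rw [betaDivDiff, div_eq_one_iff_eq (sub_ne_zero.2 hx), Function.comp_apply,
    Equiv.swap_apply_left, oplus, oplus]
  ring

theorem betaDivDiff_shapeProd (y : Fin (n + 1) → F) {μ : Fin (m + 1) → Fin (n + 1)} {i : Fin m}
    {l : Fin n} (hi : μ i.castSucc = l.castSucc) (hi' : μ i.succ = l.castSucc)
    {x : Fin (m + 1) → F} (hx : x i.castSucc ≠ x i.succ) :
    betaDivDiff β i (shapeProd β y (Function.update μ i.castSucc l.succ)) x =
      shapeProd β y μ x := by
  have symmetric : μ ∘ Equiv.swap i.castSucc i.succ = μ := by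
    rw [Equiv.comp_swap_eq_update, hi, ← hi', Function.update_eq_self, hi', ← hi,
      Function.update_eq_self]
  rw [funext (shapeProd_update_succ β y hi),
    betaDivDiff_mul_of_symmetric _ (shapeProd_comp_perm β y symmetric x),
    betaDivDiff_oplus _ hx, one_mul]

end DividedDifferences

section Grothendieck

variable [Field F] {n : ℕ} {β : F}
  {G : Equiv.Perm (Fin (n + 1)) → (Fin (n + 1) → F) → (Fin (n + 1) → F) → F}

theorem IsGroth.omegaPerm_eq_shapeProd (hG : IsGroth n β G) (x y : Fin (n + 1) → F) :
    G (omegaPerm (n + 1)) x y = shapeProd β y Fin.rev x := by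
  rw [hG.1, Finset.prod_filter, ← Finset.univ_product_univ, Finset.prod_product]
  refine Finset.prod_congr rfl fun i _ => ?_
  rw [factorialPow, ← Finset.prod_filter]
  refine Finset.prod_congr ?_ fun j _ => rfl
  ext j
  simp only [Finset.mem_filter_univ, Finset.mem_Iio, Fin.lt_def, Fin.val_rev]
  omega

theorem IsGroth.mul_swap_eq_betaDivDiff (hG : IsGroth n β G) {w : Equiv.Perm (Fin (n + 1))}
    {i : Fin n} (hw : w i.succ < w i.castSucc) {x : Fin (n + 1) → F}
    (hx : x i.castSucc ≠ x i.succ) (y : Fin (n + 1) → F) :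
    G (w * Equiv.swap i.castSucc i.succ) x y = betaDivDiff β i (fun x => G w x y) x :=
  hG.2 w i x y (permLength_mul_swap_add_one hw) hx

theorem IsGroth.omegaPerm_mul_cycleIcc_eq_shapeProd (hG : IsGroth n β G) {a p : Fin (n + 1)}
    (hap : a ≤ p) {x : Fin (n + 1) → F} (hx : Function.Injective x) (y : Fin (n + 1) → F) :
    G (omegaPerm (n + 1) * Fin.cycleIcc a p) x y =
      shapeProd β y (Function.update (Fin.rev ∘ Fin.cycleIcc a p) p p.rev) x := by
  have base (x) : G (omegaPerm (n + 1) * Fin.cycleIcc a a) x y =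
      shapeProd β y (Function.update (Fin.rev ∘ Fin.cycleIcc a a) a a.rev) x := by
    rw [Fin.cycleIcc_eq, mul_one, Equiv.Perm.coe_one, Function.comp_id, Function.update_eq_self,
      hG.omegaPerm_eq_shapeProd]
  induction p using Fin.induction generalizing x with
  | zero =>
    obtain rfl := Fin.le_zero_iff.1 hap
    exact base x
  | succ i ih =>
    rcases hap.eq_or_lt with rfl | hlt
    · exact base x
    have ha : a ≤ i.castSucc := Fin.le_castSucc_iff.2 hlt
    have hne : x i.castSucc ≠ x i.succ := hx.ne Fin.castSucc_lt_succ.ne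
    set μ := Function.update (Fin.rev ∘ Fin.cycleIcc a i.succ) i.succ i.succ.rev with hμ
    have μ_succ : μ i.succ = i.rev.castSucc := by rw [hμ, Function.update_self, Fin.rev_succ]
    have μ_castSucc : μ i.castSucc = i.rev.castSucc := by
      rw [hμ, Function.update_of_ne Fin.castSucc_lt_succ.ne, Function.comp_apply,
        Fin.cycleIcc_of_ge_of_lt ha Fin.castSucc_lt_succ, Fin.coeSucc_eq_succ, Fin.rev_succ]
    rw [cycleIcc_succ ha, ← mul_assoc,
      hG.mul_swap_eq_betaDivDiff (omegaPerm_mul_cycleIcc_succ_lt ha) hne,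
      ← betaDivDiff_shapeProd y μ_castSucc μ_succ hne, hμ, update_update_rev_comp_cycleIcc_succ ha,
      betaDivDiff, betaDivDiff, ih ha hx, ih ha (hx.comp (Equiv.injective _))]

theorem IsGroth.omegaPerm_mul_cycleIcc_last_eq_shapeProd (hG : IsGroth n β G) (a : Fin (n + 1))
    {x : Fin (n + 1) → F} (hx : Function.Injective x) (y : Fin (n + 1) → F) :
    G (omegaPerm (n + 1) * Fin.cycleIcc a (Fin.last n)) x y =
      shapeProd β y (fun i => (a.succAbove i).rev) (Fin.init x) := by
  have shape : Function.update (Fin.rev ∘ Fin.cycleIcc a (Fin.last n)) (Fin.last n)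
      (Fin.last n).rev = Fin.snoc (α := fun _ => Fin (n + 1)) (fun i => (a.succAbove i).rev) 0 := by
    ext j
    cases j using Fin.lastCases with
    | last => simp
    | cast i => simp [cycleIcc_last_castSucc, (Fin.castSucc_lt_last i).ne]
  rw [hG.omegaPerm_mul_cycleIcc_eq_shapeProd (Fin.le_last a) hx, shape, shapeProd_snoc_zero]

end Grothendieck

section GenericParameters

theorem one_add_mul_ne_zero_of_algebraicIndependent {ι R A : Type*} [CommRing R] [Nontrivial R]
    [CommRing A] [Algebra R A] {v : ι → A} (hv : AlgebraicIndependent R v) (i j : ι) :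
    1 + v i * v j ≠ 0 := by
  intro h
  have poly : (1 + MvPolynomial.X i * MvPolynomial.X j : MvPolynomial ι R) = 0 :=
    hv.eq_zero_of_aeval_eq_zero _ (by simpa using h)
  simpa using congrArg MvPolynomial.constantCoeff poly

variable [Field F] {n : ℕ} {β : F}

theorem factorialPow_snoc_negOm {t : Fin (n + 1) → F} (ht : ∀ i : Fin n, 1 + β * t i.castSucc ≠ 0)
    (y₀ u : F) (l : Fin (n + 1)) :
    factorialPow β (Fin.snoc (α := fun _ => F) (fun i => negOm β (t i.castSucc)) y₀) l u =
      ∏ j ∈ Finset.Iio l, om β u (t j) := by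
  refine Finset.prod_congr rfl fun j hj => ?_
  obtain ⟨i, rfl⟩ := Fin.exists_castSucc_eq.2 (Fin.ne_last_of_lt (Finset.mem_Iio.1 hj))
  rw [Fin.snoc_castSucc, om_eq_oplus_negOm (ht i)]

end GenericParameters

theorem bra_rho_action_general [Field F] (M k : ℕ) (hk : k ≤ M + 1) (β : F)
    {σ : Fin (M + 1) → F} (hσ : Function.Injective σ) {x₀ : F} (hx₀ : x₀ ∉ Set.range σ)
    {t : Fin (M + 2) → F} (ht : ∀ i : Fin (M + 1), 1 + β * t i.castSucc ≠ 0) (y₀ : F)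
    {G : Equiv.Perm (Fin (M + 2)) → (Fin (M + 2) → F) → (Fin (M + 2) → F) → F}
    (hG : IsGroth (M + 1) β G) :
    Matrix.vecMul (ket (M + 2) (M + 2) fun j => rhoPerm M k hk j) (descB M β t σ) =
      G ((rhoPerm M k hk)⁻¹ * omegaPerm (M + 2)) (Fin.snoc σ x₀)
          (Fin.snoc (fun i : Fin (M + 1) => negOm β (t i.castSucc)) y₀) •
        ket (M + 2) (M + 2) (fun _ => 0) := by
  obtain ⟨κ, hκ⟩ : ∃ κ : Fin (M + 2), rhoPerm M k hk = κ.cycleRange :=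
    ⟨_, rhoPerm_eq_cycleRange M k hk⟩
  have shape (i) : (κ.rev.succAbove i).rev = κ.succAbove i.rev := by
    rw [Fin.rev_succAbove, Fin.rev_rev]
  have action := ket_vecMul_prod_blockOp (β := β) (t := t) (fun _ _ => cycleRange_lt_of_lt)
    (Fin.cycleRange_succAbove κ) σ
  rw [hκ, descB, action, cycleRange_inv_mul_omegaPerm,
    hG.omegaPerm_mul_cycleIcc_last_eq_shapeProd _ (Fin.snoc_injective_iff.2 ⟨hσ, hx₀⟩),
    Fin.init_snoc, shapeProd]
  simp only [shape, factorialPow_snoc_negOm ht]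

/-- **Lemma `l2`**: for `0 ≤ k ≤ N-1` (`n = N = M+2`),
`⟨1,2,…,k,0,k+1,…,N-1| B_{N-1}(σ_1) ⋯ B_1(σ_{N-1})
  = G^β_{ρ_k⁻¹ ω_N}(σ; ⊖t) ⟨Ω|`. -/
theorem bra_rho_action [Field F] [CharZero F] (M k : ℕ) (hk : k ≤ M + 1) (β : F)
    (σ : Fin (M + 1) → F) (t : Fin (M + 2) → F)
    (hind : AlgebraicIndependent ℚ
      (Sum.elim (fun _ : Unit => β) (Sum.elim σ t)))
    (G : Equiv.Perm (Fin (M + 2)) → (Fin (M + 2) → F) → (Fin (M + 2) → F) → F)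
    (hG : IsGroth (M + 1) β G) :
    Matrix.vecMul (ket (M + 2) (M + 2) fun j => rhoPerm M k hk j) (descB M β t σ) =
      G ((rhoPerm M k hk)⁻¹ * omegaPerm (M + 2)) (Fin.snoc σ 0)
          (Fin.snoc (fun i : Fin (M + 1) => negOm β (t i.castSucc)) 0) •
        ket (M + 2) (M + 2) (fun _ => 0) := by
  have σ_injective : Function.Injective σ :=
    (hind.injective.comp Sum.inr_injective).comp Sum.inl_injective
  have zero_notMem_range : (0 : F) ∉ Set.range σ := by
    rintro ⟨a, ha⟩
    exact hind.ne_zero (Sum.inr (Sum.inl a)) ha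
  exact bra_rho_action_general M k hk β σ_injective zero_notMem_range
    (fun i => one_add_mul_ne_zero_of_algebraicIndependent hind (.inl ()) (.inr (.inr i.castSucc)))
    0 hG
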